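/- Gagliardo–Nirenberg type interpolation: there is a constant C such that for all f with f ∈ H^s(ℝ³) and ∇f ∈ H^s(ℝ³), ‖f‖_{W^{s,4}} ≤ C ‖f‖_{H^s}^{1/4} ‖∇f‖_{H^s}^{3/4}, where ‖f‖_{W^{s,4}} = ‖Λ^s f‖_{L^4}. -/

import Mathlib

open MeasureTheory FourierTransform
open scoped ENNReal

/-- Euclidean ℝ³. -/
abbrev E3 : Type := EuclideanSpace ℝ (Fin 3)

/-- The Bessel potential operator `Λˢ = (I − Δ)^{s/2}`, defined as the Fourier
multiplier with symbol `(1 + |ξ|²)^{s/2}`. -/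
noncomputable def Lam (s : ℝ) (f : E3 → ℂ) : E3 → ℂ :=
  𝓕⁻ fun ξ : E3 => (((1 + ‖ξ‖ ^ 2) ^ (s / 2) : ℝ) : ℂ) * 𝓕 f ξ

/-- The `Hˢ` Sobolev norm, defined on the Fourier side. -/
noncomputable def HsNorm (s : ℝ) (f : E3 → ℂ) : ℝ :=
  (∫ ξ : E3, (1 + ‖ξ‖ ^ 2) ^ s * ‖𝓕 f ξ‖ ^ 2) ^ (1 / 2 : ℝ)

/-- Partial derivative `∂_k` of a complex-valued function on ℝ³. -/
noncomputable def pdC (k : Fin 3) (f : E3 → ℂ) : E3 → ℂ :=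
  fun x => fderiv ℝ f x (EuclideanSpace.single k 1)

/-- Membership in `Hˢ` (together with integrability, so that the Fourier transform is
given by the Fourier integral). -/
def MemHs (s : ℝ) (f : E3 → ℂ) : Prop :=
  Integrable f volume ∧
    Integrable (fun ξ : E3 => (1 + ‖ξ‖ ^ 2) ^ s * ‖𝓕 f ξ‖ ^ 2) volume


lemma plancherel_le (G : E3 → ℂ) (h1 : Integrable G) (h2 : MemLp G 2) :
    eLpNorm (𝓕 G) 2 volume = eLpNorm G 2 volume := by
  set F : Lp (α := E3) ℂ 2 volume := 𝓕 (h2.toLp G) with hF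
  have key : 𝓕 G =ᵐ[volume] F := by
    apply ae_eq_of_integral_contDiff_smul_eq
    · have : Continuous (𝓕 G) := by
        exact VectorFourier.fourierIntegral_continuous Real.continuous_fourierChar
          (innerSL ℝ).continuous₂ h1
      exact this.locallyIntegrable
    · exact (Lp.memLp F).locallyIntegrable (by norm_num)
    · intro g g_smooth g_cpt
      have hg₁ : HasCompactSupport (Complex.ofRealCLM ∘ g) := g_cpt.comp_left rfl
      have hg₂ : ContDiff ℝ ((⊤ : ℕ∞) : WithTop ℕ∞) (Complex.ofRealCLM ∘ g) :=
        Complex.ofRealCLM.contDiff.comp g_smooth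
      set φ := hg₁.toSchwartzMap hg₂ with hφ
      have e1 : ∫ x, g x • F x = (Lp.toTemperedDistribution F) φ := by
        simp [hφ]
      have e2 : (Lp.toTemperedDistribution F) φ = ∫ x, (𝓕 φ) x • G x := by
        rw [hF, ← Lp.fourier_toTemperedDistribution_eq, TemperedDistribution.fourier_apply,
          Lp.toTemperedDistribution_apply]
        apply integral_congr_ae
        filter_upwards [h2.coeFn_toLp] with x hx
        rw [hx]
      have e3 : ∫ x, (𝓕 φ) x • G x = ∫ x, φ x • 𝓕 G x := by
        have := VectorFourier.integral_fourierIntegral_smul_eq_flip (μ := volume) (ν := volume)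
          (L := innerₗ E3) (f := (φ : E3 → ℂ)) (g := G) Real.continuous_fourierChar
          (innerSL ℝ).continuous₂ φ.integrable h1
        rw [flip_innerₗ] at this
        exact this
      rw [e1, e2, e3]
      apply integral_congr_ae
      filter_upwards with x
      simp [hφ]
  rw [eLpNorm_congr_ae key]
  have := Lp.norm_fourier_eq (h2.toLp G)
  rw [← hF, Lp.norm_def, Lp.norm_def,
    ENNReal.toReal_eq_toReal_iff' (Lp.eLpNorm_ne_top _) (Lp.eLpNorm_ne_top _)] at this
  rw [this, eLpNorm_congr_ae h2.coeFn_toLp]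

lemma young (u : E3 → ℝ≥0∞) (hu : Measurable u) :
    ∫⁻ x, (∫⁻ y, u y * u (x - y)) ^ (2:ℝ) ≤ (∫⁻ x, u x ^ (4/3 : ℝ)) ^ (3:ℝ) := by
  set N := ∫⁻ x, u x ^ (4/3 : ℝ) with hN
  have hsub : ∀ x, ∫⁻ y, u (x - y) ^ (4/3 : ℝ) = N := fun x =>
    lintegral_sub_left_eq_self (fun y => u y ^ (4/3:ℝ)) x
  have h1 : ∀ x, (∫⁻ y, u y * u (x - y)) ^ (2:ℝ) ≤
      (∫⁻ y, u y ^ (4/3:ℝ) * u (x - y) ^ (4/3:ℝ)) * N := by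
    intro x
    have hm : Measurable fun y => u (x - y) := hu.comp (measurable_const.sub measurable_id)
    have a1 : ∫⁻ y, u y * u (x - y) ≤
        (∫⁻ y, u y ^ (4/3:ℝ) * u (x - y) ^ (4/3:ℝ)) ^ (1/2:ℝ) *
        (∫⁻ y, u y ^ (2/3:ℝ) * u (x - y) ^ (2/3:ℝ)) ^ (1/2:ℝ) := by
      have := ENNReal.lintegral_mul_norm_pow_le (μ := (volume : Measure E3))
        (f := fun y => u y ^ (4/3:ℝ) * u (x - y) ^ (4/3:ℝ))
        (g := fun y => u y ^ (2/3:ℝ) * u (x - y) ^ (2/3:ℝ)) (by fun_prop) (by fun_prop)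
        (p := 1/2) (q := 1/2) (by norm_num) (by norm_num) (by norm_num)
      refine le_trans (le_of_eq ?_) this
      congr 1; ext y
      rw [ENNReal.mul_rpow_of_nonneg _ _ (by norm_num), ENNReal.mul_rpow_of_nonneg _ _ (by norm_num)]
      simp only [← ENNReal.rpow_mul]
      rw [mul_mul_mul_comm, ← ENNReal.rpow_add_of_nonneg _ _ (by norm_num) (by norm_num),
        ← ENNReal.rpow_add_of_nonneg _ _ (by norm_num) (by norm_num)]
      norm_num
    have a2 : ∫⁻ y, u y ^ (2/3:ℝ) * u (x - y) ^ (2/3:ℝ) ≤ N := by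
      have := ENNReal.lintegral_mul_norm_pow_le (μ := (volume : Measure E3))
        (f := fun y => u y ^ (4/3:ℝ))
        (g := fun y => u (x - y) ^ (4/3:ℝ)) (by fun_prop) (by fun_prop)
        (p := 1/2) (q := 1/2) (by norm_num) (by norm_num) (by norm_num)
      rw [hsub, ← hN, ← ENNReal.rpow_add_of_nonneg _ _ (by norm_num) (by norm_num)] at this
      simp only [← ENNReal.rpow_mul] at this
      norm_num at this
      exact this
    calc (∫⁻ y, u y * u (x - y)) ^ (2:ℝ) ≤ ((∫⁻ y, u y ^ (4/3:ℝ) * u (x - y) ^ (4/3:ℝ)) ^ (1/2:ℝ) *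
        N ^ (1/2:ℝ)) ^ (2:ℝ) := by
          gcongr
          exact a1.trans (by gcongr)
      _ = _ := by
          rw [ENNReal.mul_rpow_of_nonneg _ _ (by norm_num)]
          simp only [← ENNReal.rpow_mul]
          norm_num
  calc _ ≤ ∫⁻ x, (∫⁻ y, u y ^ (4/3:ℝ) * u (x - y) ^ (4/3:ℝ)) * N := lintegral_mono h1
    _ = (∫⁻ x, ∫⁻ y, u y ^ (4/3:ℝ) * u (x - y) ^ (4/3:ℝ)) * N := by
        rw [lintegral_mul_const]
        apply Measurable.lintegral_prod_right' (f := fun p : E3 × E3 => u p.2 ^ (4/3:ℝ) * u (p.1 - p.2) ^ (4/3:ℝ))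
        fun_prop
    _ = (∫⁻ y, ∫⁻ x, u y ^ (4/3:ℝ) * u (x - y) ^ (4/3:ℝ)) * N := by
        rw [lintegral_lintegral_swap]
        apply Measurable.aemeasurable
        have : Measurable (fun p : E3 × E3 => u p.2 ^ (4/3:ℝ) * u (p.1 - p.2) ^ (4/3:ℝ)) := by fun_prop
        exact this
    _ = (∫⁻ y, u y ^ (4/3:ℝ) * N) * N := by
        congr 2; ext y
        rw [lintegral_const_mul _ (by fun_prop), lintegral_sub_right_eq_self (fun x => u x ^ (4/3:ℝ)) y]
    _ = N * N * N := by
        rw [lintegral_mul_const _ (by fun_prop)]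
    _ = N ^ (3:ℝ) := by
        rw [show (3:ℝ) = ((3:ℕ):ℝ) by norm_num, ENNReal.rpow_natCast]; ring

lemma hausdorff_young (g : E3 → ℂ) (hg : Integrable g) (hm : Measurable g)
    (hN : ∫⁻ x, ‖g x‖ₑ ^ (4/3:ℝ) ≠ ⊤) :
    eLpNorm (𝓕⁻ g) 4 volume ≤ (∫⁻ x, ‖g x‖ₑ ^ (4/3:ℝ)) ^ (3/4:ℝ) := by
  have e0 : eLpNorm (𝓕⁻ g) 4 volume = eLpNorm (𝓕 g) 4 volume := by
    have : 𝓕⁻ g = 𝓕 g ∘ (fun x => -x) := by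
      ext x; exact Real.fourierInv_eq_fourier_neg g x
    rw [this]
    apply eLpNorm_comp_measurePreserving _ (Measure.measurePreserving_neg volume)
    have : Continuous (𝓕 g) := by
      exact VectorFourier.fourierIntegral_continuous Real.continuous_fourierChar
          (innerSL ℝ).continuous₂ hg
    exact this.aestronglyMeasurable
  rw [e0]
  set G : E3 → ℂ := convolution g g (ContinuousLinearMap.mul ℂ ℂ) volume with hG
  have hGi : Integrable G := hg.integrable_convolution _ hg
  have hb : ∫⁻ x, ‖G x‖ₑ ^ (2:ℝ) ≤ (∫⁻ x, ‖g x‖ₑ ^ (4/3:ℝ)) ^ (3:ℝ) := by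
    refine le_trans ?_ (young (fun x => ‖g x‖ₑ) hm.enorm)
    apply lintegral_mono
    intro x
    dsimp only
    gcongr
    rw [hG, convolution]
    refine (enorm_integral_le_lintegral_enorm _).trans ?_
    simp [enorm_mul]
  have hG2 : eLpNorm G 2 volume ≤ (∫⁻ x, ‖g x‖ₑ ^ (4/3:ℝ)) ^ (3/2:ℝ) := by
    rw [eLpNorm_eq_lintegral_rpow_enorm_toReal (by norm_num) (by norm_num)]
    simp only [ENNReal.toReal_ofNat]
    calc _ ≤ ((∫⁻ x, ‖g x‖ₑ ^ (4/3:ℝ)) ^ (3:ℝ)) ^ (1/2:ℝ) := by gcongr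
      _ = _ := by rw [← ENNReal.rpow_mul]; norm_num
  have hGm : MemLp G 2 := ⟨hGi.1, hG2.trans_lt (ENNReal.rpow_lt_top_of_nonneg (by norm_num) hN)⟩
  have hp := plancherel_le G hGi hGm
  have hconv : 𝓕 G = fun ξ => 𝓕 g ξ * 𝓕 g ξ := by
    ext ξ; exact Real.fourier_mul_convolution_eq hg hg ξ
  have h4 : eLpNorm (𝓕 g) 4 volume = (eLpNorm (𝓕 G) 2 volume) ^ (1/2:ℝ) := by
    rw [hconv, eLpNorm_eq_lintegral_rpow_enorm_toReal (by norm_num) (by norm_num),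
      eLpNorm_eq_lintegral_rpow_enorm_toReal (by norm_num) (by norm_num), ← ENNReal.rpow_mul]
    simp only [ENNReal.toReal_ofNat, enorm_mul]
    congr 1
    · congr 1; ext ξ
      rw [ENNReal.mul_rpow_of_nonneg _ _ (by norm_num),
        ← ENNReal.rpow_add_of_nonneg _ _ (by norm_num) (by norm_num)]
      norm_num
    · norm_num
  rw [h4, hp]
  calc _ ≤ ((∫⁻ x, ‖g x‖ₑ ^ (4/3:ℝ)) ^ (3/2:ℝ)) ^ (1/2:ℝ) := by gcongr
    _ = _ := by rw [← ENNReal.rpow_mul]; norm_num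

lemma weight_int (R : ℝ) (hR : 0 < R) :
    ∫⁻ ξ : E3, (ENNReal.ofReal (R ^ 2 + ‖ξ‖ ^ 2) ^ (2:ℝ))⁻¹ ≤
      ENNReal.ofReal (((∫ ξ : E3, (1 + ‖ξ‖ ^ 2) ^ (-(4:ℝ) / 2)) + 1) / R) := by
  have hK : Integrable (fun ξ : E3 => ((1:ℝ) + ‖ξ‖ ^ 2) ^ (-(4:ℝ) / 2)) :=
    integrable_rpow_neg_one_add_norm_sq (by simp; norm_num)
  set K := ∫ ξ : E3, (1 + ‖ξ‖ ^ 2) ^ (-(4:ℝ) / 2) with hKd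
  have hRi : (R⁻¹ : ℝ) ≠ 0 := by positivity
  have e : ∀ ξ : E3, (ENNReal.ofReal (R ^ 2 + ‖ξ‖ ^ 2) ^ (2:ℝ))⁻¹ =
      ENNReal.ofReal ((R ^ 4)⁻¹ * (1 + ‖R⁻¹ • ξ‖ ^ 2) ^ (-(4:ℝ) / 2)) := by
    intro ξ
    have h1 : 0 < R ^ 2 + ‖ξ‖ ^ 2 := by positivity
    rw [ENNReal.ofReal_rpow_of_pos h1, ← ENNReal.ofReal_inv_of_pos (by positivity)]
    congr 1
    rw [norm_smul, norm_inv, Real.norm_of_nonneg hR.le, show (-(4:ℝ)/2) = -(2:ℝ) by norm_num,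
      Real.rpow_neg (by positivity), show (2:ℝ) = ((2:ℕ):ℝ) by norm_num, Real.rpow_natCast,
      Real.rpow_natCast, ← mul_inv]
    congr 1
    field_simp
  simp_rw [e]
  rw [← ofReal_integral_eq_lintegral_ofReal ((hK.comp_smul hRi).const_mul _)
    (Filter.Eventually.of_forall fun ξ => by positivity)]
  apply ENNReal.ofReal_le_ofReal
  rw [integral_const_mul, Measure.integral_comp_inv_smul volume
    (fun ξ : E3 => ((1:ℝ) + ‖ξ‖ ^ 2) ^ (-(4:ℝ) / 2)) R]
  rw [← hKd]
  simp only [finrank_euclideanSpace, Fintype.card_fin, smul_eq_mul]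
  rw [abs_of_pos (by positivity)]
  rw [show (R ^ 4)⁻¹ * (R ^ 3 * K) = K / R by field_simp]
  gcongr
  linarith

lemma holder_step (u : E3 → ℝ≥0∞) (hu : Measurable u) (R : ℝ) (hR : 0 < R) (A2 B2 : ℝ)
    (hA0 : 0 ≤ A2) (hB0 : 0 ≤ B2) (hB : ∫⁻ ξ, u ξ ^ (2:ℝ) = ENNReal.ofReal B2)
    (hA : ∫⁻ ξ, ENNReal.ofReal (‖ξ‖ ^ 2) * u ξ ^ (2:ℝ) = ENNReal.ofReal A2) :
    (∫⁻ x, u x ^ (4/3:ℝ)) ^ (3/4:ℝ) ≤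
      ENNReal.ofReal ((R ^ 2 * B2 + A2) ^ (1/2:ℝ) *
        (((∫ ξ : E3, (1 + ‖ξ‖ ^ 2) ^ (-(4:ℝ) / 2)) + 1) / R) ^ (1/4:ℝ)) := by
  have hw := weight_int R hR
  have hK0 : 0 ≤ ∫ ξ : E3, ((1:ℝ) + ‖ξ‖ ^ 2) ^ (-(4:ℝ) / 2) :=
    integral_nonneg fun ξ => by positivity
  set K := (∫ ξ : E3, ((1:ℝ) + ‖ξ‖ ^ 2) ^ (-(4:ℝ) / 2)) + 1 with hKd
  have hK : 0 < K := by linarith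
  have hmw : Measurable fun ξ : E3 => ENNReal.ofReal (R ^ 2 + ‖ξ‖ ^ 2) := by fun_prop
  have h1 := ENNReal.lintegral_mul_norm_pow_le (μ := (volume : Measure E3))
        (f := fun ξ => u ξ ^ (2:ℝ) * ENNReal.ofReal (R ^ 2 + ‖ξ‖ ^ 2))
        (g := fun ξ => (ENNReal.ofReal (R ^ 2 + ‖ξ‖ ^ 2) ^ (2:ℝ))⁻¹) (by fun_prop) (by fun_prop)
        (p := 2/3) (q := 1/3) (by norm_num) (by norm_num) (by norm_num)
  have h2 : ∫⁻ ξ, u ξ ^ (2:ℝ) * ENNReal.ofReal (R ^ 2 + ‖ξ‖ ^ 2) =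
      ENNReal.ofReal (R ^ 2 * B2 + A2) := by
    have : ∀ ξ : E3, u ξ ^ (2:ℝ) * ENNReal.ofReal (R ^ 2 + ‖ξ‖ ^ 2) =
      ENNReal.ofReal (R ^ 2) * u ξ ^ (2:ℝ) + ENNReal.ofReal (‖ξ‖ ^ 2) * u ξ ^ (2:ℝ) := by
      intro ξ
      rw [ENNReal.ofReal_add (by positivity) (by positivity)]; ring
    simp_rw [this]
    rw [lintegral_add_left (by fun_prop), lintegral_const_mul _ (by fun_prop), hA, hB,
      ← ENNReal.ofReal_mul (by positivity), ← ENNReal.ofReal_add (by positivity) hA0]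
  have h3 : ∀ ξ : E3, (u ξ ^ (2:ℝ) * ENNReal.ofReal (R ^ 2 + ‖ξ‖ ^ 2)) ^ (2/3:ℝ) *
      ((ENNReal.ofReal (R ^ 2 + ‖ξ‖ ^ 2) ^ (2:ℝ))⁻¹) ^ (1/3:ℝ) = u ξ ^ (4/3:ℝ) := by
    intro ξ
    have hp : 0 < R ^ 2 + ‖ξ‖ ^ 2 := by positivity
    rw [ENNReal.mul_rpow_of_nonneg _ _ (by norm_num), ENNReal.inv_rpow, ← ENNReal.rpow_mul,
      ← ENNReal.rpow_mul, show (2:ℝ) * (1/3) = 2/3 by norm_num, mul_assoc, ENNReal.mul_inv_cancel]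
    · norm_num
    · simp only [ne_eq, ENNReal.rpow_eq_zero_iff, not_or, not_and]
      refine ⟨fun h => absurd (ENNReal.ofReal_eq_zero.1 h) (not_le.2 hp), fun h => absurd h ENNReal.ofReal_ne_top⟩
    · exact ENNReal.rpow_ne_top_of_nonneg (by norm_num) ENNReal.ofReal_ne_top
  simp_rw [h3, h2] at h1
  calc _ ≤ (ENNReal.ofReal (R ^ 2 * B2 + A2) ^ (2/3:ℝ) * ENNReal.ofReal (K / R) ^ (1/3:ℝ)) ^ (3/4:ℝ) := by
        gcongr
        exact h1.trans (by gcongr)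
    _ = _ := by
        rw [ENNReal.mul_rpow_of_nonneg _ _ (by norm_num), ← ENNReal.rpow_mul, ← ENNReal.rpow_mul,
          ENNReal.ofReal_rpow_of_nonneg (by positivity) (by norm_num),
          ENNReal.ofReal_rpow_of_nonneg (by positivity) (by norm_num),
          ← ENNReal.ofReal_mul (by positivity)]
        norm_num

lemma N_bound (u : E3 → ℝ≥0∞) (hu : Measurable u) (A2 B2 : ℝ)
    (hA0 : 0 ≤ A2) (hB0 : 0 ≤ B2) (hB : ∫⁻ ξ, u ξ ^ (2:ℝ) = ENNReal.ofReal B2)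
    (hA : ∫⁻ ξ, ENNReal.ofReal (‖ξ‖ ^ 2) * u ξ ^ (2:ℝ) = ENNReal.ofReal A2) :
    (∫⁻ x, u x ^ (4/3:ℝ)) ^ (3/4:ℝ) ≤
      ENNReal.ofReal ((√2 * ((∫ ξ : E3, (1 + ‖ξ‖ ^ 2) ^ (-(4:ℝ) / 2)) + 1) ^ (1/4:ℝ)) *
        (√B2) ^ (1/4:ℝ) * (√A2) ^ (3/4:ℝ)) := by
  have hK0 : 0 ≤ ∫ ξ : E3, ((1:ℝ) + ‖ξ‖ ^ 2) ^ (-(4:ℝ) / 2) :=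
    integral_nonneg fun ξ => by positivity
  have triv : (∀ᵐ ξ, u ξ = 0) → (∫⁻ x, u x ^ (4/3:ℝ)) ^ (3/4:ℝ) = 0 := by
    intro h
    have : ∫⁻ x, u x ^ (4/3:ℝ) = 0 := by
      rw [lintegral_eq_zero_iff (by fun_prop)]
      filter_upwards [h] with ξ hξ
      simp [hξ]
    rw [this]; simp
  rcases hB0.eq_or_lt with h | hBp
  · rw [triv]
    · exact zero_le
    · rw [← h, ENNReal.ofReal_zero, lintegral_eq_zero_iff (by fun_prop)] at hB
      filter_upwards [hB] with ξ hξ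
      simpa using hξ
  rcases hA0.eq_or_lt with h | hAp
  · rw [triv]
    · exact zero_le
    · rw [← h, ENNReal.ofReal_zero, lintegral_eq_zero_iff (by fun_prop)] at hA
      filter_upwards [hA, Measure.ae_ne volume (0:E3)] with ξ hξ h0
      simpa [h0] using hξ
  have ha : 0 < √A2 := Real.sqrt_pos.2 hAp
  have hb : 0 < √B2 := Real.sqrt_pos.2 hBp
  refine (holder_step u hu (√A2 / √B2) (by positivity) A2 B2 hA0 hB0 hB hA).trans (le_of_eq ?_)
  congr 1
  set K := (∫ ξ : E3, ((1:ℝ) + ‖ξ‖ ^ 2) ^ (-(4:ℝ) / 2)) + 1 with hKd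
  have hK : 0 < K := by linarith
  have e1 : (√A2 / √B2) ^ 2 * B2 + A2 = 2 * A2 := by
    rw [div_pow, Real.sq_sqrt hA0, Real.sq_sqrt hB0]; field_simp; ring
  rw [e1, ← Real.sqrt_eq_rpow, Real.sqrt_mul (by norm_num), div_div_eq_mul_div, 
    Real.div_rpow (by positivity) (by positivity), Real.mul_rpow (by positivity) (by positivity)]
  have e2 : √A2 = √A2 ^ (3/4:ℝ) * √A2 ^ (1/4:ℝ) := by
    rw [← Real.rpow_add ha]; norm_num
  have : 0 < √A2 ^ (1/4:ℝ) := by positivity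
  field_simp
  linear_combination e2

lemma integrable_add3 {X : Type*} [NormedAddCommGroup X] (a b c : E3 → X)
    (ha : Integrable a) (hb : Integrable b) (hc : Integrable c) :
    Integrable (fun x => a x + b x + c x) := (ha.add hb).add hc

lemma fourier_pd (f : E3 → ℂ) (hd : Differentiable ℝ f) (hi : Integrable f)
    (hk : ∀ k, Integrable (pdC k f)) (k : Fin 3) (ξ : E3) :
    ‖𝓕 (pdC k f) ξ‖ ^ 2 = (2 * Real.pi) ^ 2 * (ξ k) ^ 2 * ‖𝓕 f ξ‖ ^ 2 := by
  have hfd : Integrable (fderiv ℝ f) := by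
    have : fderiv ℝ f = fun x => ∑ k, (EuclideanSpace.proj k : E3 →L[ℝ] ℝ).smulRight (pdC k f x) := by
      ext x v
      have hv : v = ∑ k, v k • EuclideanSpace.single k (1:ℝ) := by
        ext j; simp [Fin.sum_univ_three]; fin_cases j <;> simp
      conv_lhs => rw [hv]
      simp [pdC]
    have hI : ∀ k, Integrable (fun x =>
        (EuclideanSpace.proj k : E3 →L[ℝ] ℝ).smulRight (pdC k f x)) := by
      intro k
      let L : ℂ →L[ℝ] (E3 →L[ℝ] ℂ) := ContinuousLinearMap.smulRightL ℝ E3 ℂ (EuclideanSpace.proj k)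
      have h := L.integrable_comp (hk k)
      exact h
    rw [this]
    simp only [Fin.sum_univ_three]
    exact integrable_add3 (X := E3 →L[ℝ] ℂ) _ _ _ (hI 0) (hI 1) (hI 2)
  have h1 := congrFun (Real.fourier_fderiv hi hd hfd) ξ
  have h2 := Real.fourier_continuousLinearMap_apply (a := EuclideanSpace.single k (1:ℝ)) (v := ξ) hfd
  have h3 : 𝓕 (pdC k f) ξ = 𝓕 (fderiv ℝ f) ξ (EuclideanSpace.single k (1:ℝ)) := h2.symm
  rw [h3, h1]
  simp [VectorFourier.fourierSMulRight_apply, mul_pow, abs_of_pos Real.pi_pos]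
  have h4 : (innerSL ℝ) ξ (EuclideanSpace.single k (1:ℝ)) = ξ k := by
    rw [innerSL_apply_apply, EuclideanSpace.inner_single_right]; simp
  rw [h4]
  ring

theorem stmt10 (s : ℝ) :
    ∃ C : ℝ, 0 < C ∧ ∀ f : E3 → ℂ, Differentiable ℝ f → MemHs s f →
      (∀ k, MemHs s (pdC k f)) →
      eLpNorm (Lam s f) 4 volume ≤
        ENNReal.ofReal (C * HsNorm s f ^ (1 / 4 : ℝ) *
          Real.sqrt (∑ k, HsNorm s (pdC k f) ^ 2) ^ (3 / 4 : ℝ)) := by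
  have hK0 : 0 ≤ ∫ ξ : E3, ((1:ℝ) + ‖ξ‖ ^ 2) ^ (-(4:ℝ) / 2) :=
    integral_nonneg fun ξ => by positivity
  refine ⟨√2 * ((∫ ξ : E3, (1 + ‖ξ‖ ^ 2) ^ (-(4:ℝ) / 2)) + 1) ^ (1/4:ℝ), by positivity, ?_⟩
  intro f hd hf hk
  set g : E3 → ℂ := fun ξ => (((1 + ‖ξ‖ ^ 2) ^ (s / 2) : ℝ) : ℂ) * 𝓕 f ξ with hg
  have hL : Lam s f = 𝓕⁻ g := rfl
  by_cases hgi : Integrable g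
  swap
  · have : Lam s f = 0 := by
      ext x
      rw [hL, Real.fourierInv_eq_fourier_neg, Real.fourier_eq]
      exact integral_undef (by rwa [Real.fourierIntegral_convergent_iff])
    rw [this]; simp
  have hcf : Continuous (𝓕 f) := by
    exact VectorFourier.fourierIntegral_continuous Real.continuous_fourierChar
          (innerSL ℝ).continuous₂ hf.1
  have hgc : Continuous g := by
    refine Continuous.mul (Complex.continuous_ofReal.comp ?_) hcf
    exact Continuous.rpow_const (by fun_prop) (fun ξ => Or.inl (by positivity))
  have hpt : ∀ ξ, ‖g ξ‖ₑ ^ (2:ℝ) = ENNReal.ofReal ((1 + ‖ξ‖ ^ 2) ^ s * ‖𝓕 f ξ‖ ^ 2) := by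
    intro ξ
    have hp : 0 < 1 + ‖ξ‖ ^ 2 := by positivity
    rw [← ofReal_norm, ENNReal.ofReal_rpow_of_nonneg (by positivity) (by norm_num)]
    congr 1
    rw [hg]
    simp only [norm_mul, Complex.norm_real]
    rw [Real.norm_of_nonneg (by positivity), show (2:ℝ) = ((2:ℕ):ℝ) by norm_num, Real.rpow_natCast,
      mul_pow, ← Real.rpow_natCast, ← Real.rpow_mul hp.le]
    norm_num
  set B2 := ∫ ξ : E3, (1 + ‖ξ‖ ^ 2) ^ s * ‖𝓕 f ξ‖ ^ 2 with hB2
  set A2 := ∫ ξ : E3, ‖ξ‖ ^ 2 * ((1 + ‖ξ‖ ^ 2) ^ s * ‖𝓕 f ξ‖ ^ 2) with hA2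
  have hB0 : 0 ≤ B2 := integral_nonneg fun ξ => by positivity
  have hA0 : 0 ≤ A2 := integral_nonneg fun ξ => by positivity
  have hsum : ∀ ξ : E3, ∑ k, (1 + ‖ξ‖ ^ 2) ^ s * ‖𝓕 (pdC k f) ξ‖ ^ 2 =
      (2 * Real.pi) ^ 2 * (‖ξ‖ ^ 2 * ((1 + ‖ξ‖ ^ 2) ^ s * ‖𝓕 f ξ‖ ^ 2)) := by
    intro ξ
    simp_rw [fourier_pd f hd hf.1 (fun k => (hk k).1)]
    have : ‖ξ‖ ^ 2 = ∑ k, (ξ k) ^ 2 := by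
      rw [EuclideanSpace.norm_sq_eq]; simp
    rw [← Finset.mul_sum, ← Finset.sum_mul, ← Finset.mul_sum, ← this]
    ring
  have hIs : Integrable (fun ξ : E3 => (2 * Real.pi) ^ 2 *
      (‖ξ‖ ^ 2 * ((1 + ‖ξ‖ ^ 2) ^ s * ‖𝓕 f ξ‖ ^ 2))) := by
    simp_rw [← hsum]
    exact integrable_finsetSum _ fun k _ => (hk k).2
  have hpi : ((2 * Real.pi) ^ 2) ≠ 0 := by positivity
  have hI : Integrable (fun ξ : E3 => ‖ξ‖ ^ 2 * ((1 + ‖ξ‖ ^ 2) ^ s * ‖𝓕 f ξ‖ ^ 2)) :=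
    (integrable_const_mul_iff (IsUnit.mk0 _ hpi) _).1 hIs
  have hH : HsNorm s f = √B2 := by rw [Real.sqrt_eq_rpow]; rfl
  have hHk : ∑ k, HsNorm s (pdC k f) ^ 2 = (2 * Real.pi) ^ 2 * A2 := by
    rw [hA2, ← integral_const_mul]
    simp_rw [← hsum]
    rw [integral_finsetSum _ fun k _ => (hk k).2]
    refine Finset.sum_congr rfl fun k _ => ?_
    rw [HsNorm, ← Real.sqrt_eq_rpow, Real.sq_sqrt (integral_nonneg fun ξ => by positivity)]
  have hB : ∫⁻ ξ, ‖g ξ‖ₑ ^ (2:ℝ) = ENNReal.ofReal B2 := by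
    simp_rw [hpt]
    rw [hB2, ofReal_integral_eq_lintegral_ofReal hf.2
      (Filter.Eventually.of_forall fun ξ => by positivity)]
  have hA : ∫⁻ ξ, ENNReal.ofReal (‖ξ‖ ^ 2) * ‖g ξ‖ₑ ^ (2:ℝ) = ENNReal.ofReal A2 := by
    simp_rw [hpt]
    rw [hA2, ofReal_integral_eq_lintegral_ofReal hI
      (Filter.Eventually.of_forall fun ξ => by positivity)]
    congr 1; ext ξ
    rw [← ENNReal.ofReal_mul (sq_nonneg ‖ξ‖)]
  have hN := N_bound (fun ξ => ‖g ξ‖ₑ) hgc.measurable.enorm A2 B2 hA0 hB0 hB hA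
  have hNt : ∫⁻ x, ‖g x‖ₑ ^ (4/3:ℝ) ≠ ⊤ := by
    intro h
    simp only [h] at hN
    rw [ENNReal.top_rpow_of_pos (by norm_num)] at hN
    exact absurd (top_le_iff.1 hN) ENNReal.ofReal_ne_top
  rw [hL]
  refine (hausdorff_young g hgi hgc.measurable hNt).trans (hN.trans ?_)
  apply ENNReal.ofReal_le_ofReal
  rw [hH, hHk]
  gcongr
  have : (1:ℝ) ≤ (2 * Real.pi) ^ 2 := by nlinarith [Real.pi_gt_three]
  nlinarith
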